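/- For every odd integer n ≥ 3 there exists a 2×4 integer matrix X with X·Xᵀ = G_n, where G_n = diag(n + 2, n − 2); equivalently, there exist integers y₁, …, y₈ satisfying y₃² + y₄² + y₅² + y₆² = n − 2, y₁² + y₂² + y₇² + y₈² = n + 2, and y₁y₅ + y₂y₆ − y₃y₇ − y₄y₈ = 0. -/

import Mathlib

open Matrix

/-!
Positive integers `u`, `w` are the squared lengths of two orthogonal vectors of `ℤ⁴` as soon as
`diag(u, w)` is the upper left block of the Gram matrix of a positive definite unimodular lattice
of rank `4`: by Hermite's bound `min G ≤ (4/3)^((n-1)/2) (det G)^(1/n)` such a lattice has a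
vector of length `1`, which splits off, so that by induction on the rank it is isometric to `ℤ⁴`.

The block is completed with an identity matrix next to it and `[w a, c; c, u b]` below, which makes
the determinant `1` exactly when `a + b + c² = a b u w`. When `m = u w ≡ 5 (mod 8)`, Dirichlet's
theorem yields `b ≡ 3 (mod 8)` such that `b m - 1` is twice a prime `p ≡ 3 (mod 4)`; the equation
becomes `2 p a = c² + b`, and `-b` is a square modulo `p` by quadratic reciprocity.
-/

section Condensation

variable {R : Type*} [CommRing R] {n : ℕ}

/-- The square matrix with first row `r`, with `A` in the lower right corner, and with zeros in the
remaining entries of the first column. -/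
def bordered (r : Fin (n + 1) → R) (A : Matrix (Fin n) (Fin n) R) :
    Matrix (Fin (n + 1)) (Fin (n + 1)) R :=
  of (Fin.cons r fun i => Fin.cons 0 (A i))

theorem det_bordered (r : Fin (n + 1) → R) (A : Matrix (Fin n) (Fin n) R) :
    (bordered r A).det = r 0 * A.det := by
  have corner : bordered r A 0 0 = r 0 := rfl
  have column (i : Fin n) : bordered r A i.succ 0 = 0 := rfl
  have minor : (bordered r A).submatrix Fin.succ Fin.succ = A := rfl
  simp [det_succ_column_zero, Fin.sum_univ_succ, corner, column, minor]

/-- Chio's pivotal condensation of `G`: the matrix of the `2 × 2` minors of `G` through the pivot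
`G 0 0`. It is `G 0 0` times the Schur complement of the pivot, without a division, so that
Gaussian elimination stays over the integers. -/
def chioCondensation (G : Matrix (Fin (n + 1)) (Fin (n + 1)) R) : Matrix (Fin n) (Fin n) R :=
  of fun i j => G 0 0 * G i.succ j.succ - G i.succ 0 * G 0 j.succ

theorem apply_zero_zero_mul_det_chioCondensation (G : Matrix (Fin (n + 1)) (Fin (n + 1)) R) :
    G 0 0 * (chioCondensation G).det = G 0 0 ^ n * G.det := by
  let scaled : Matrix (Fin (n + 1)) (Fin (n + 1)) R :=
    of fun i j => (Fin.cons 1 fun _ => G 0 0 : Fin (n + 1) → R) i * G i j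
  have det_scaled : scaled.det = G 0 0 ^ n * G.det := by
    simp [scaled, det_mul_column, Fin.prod_univ_succ]
  rw [← det_scaled, ← det_bordered]
  refine det_eq_of_forall_row_eq_smul_add_const
    (Fin.cons 0 fun i => -G i.succ 0 : Fin (n + 1) → R) 0 rfl fun i j => ?_
  cases i using Fin.cases <;> cases j using Fin.cases <;>
    simp [bordered, scaled, chioCondensation] <;> ring

theorem apply_zero_zero_mul_dotProduct_mulVec {G : Matrix (Fin (n + 1)) (Fin (n + 1)) R}
    (hG : G.IsSymm) (x : Fin (n + 1) → R) :
    G 0 0 * (x ⬝ᵥ G *ᵥ x) =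
      (G 0 ⬝ᵥ x) ^ 2 + vecTail x ⬝ᵥ chioCondensation G *ᵥ vecTail x := by
  have tail_eq : vecTail x ⬝ᵥ chioCondensation G *ᵥ vecTail x =
      x ⬝ᵥ (G 0 0 • G - vecMulVec (G 0) (G 0)) *ᵥ x := by
    simp [dotProduct, mulVec, Fin.sum_univ_succ, vecTail, chioCondensation, vecMulVec_apply,
      hG.apply 0, mul_comm]
  rw [tail_eq, sub_mulVec, dotProduct_sub, smul_mulVec, dotProduct_smul, vecMulVec_mulVec]
  simp [dotProduct_smul, dotProduct_comm x (G 0), pow_two]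

theorem isSymm_chioCondensation {G : Matrix (Fin (n + 1)) (Fin (n + 1)) R} (hG : G.IsSymm) :
    (chioCondensation G).IsSymm := by
  ext i j
  simp only [transpose_apply, chioCondensation, of_apply, hG.apply i.succ j.succ,
    hG.apply 0 i.succ, hG.apply 0 j.succ]
  ring

section PosDef

variable [LinearOrder R] [IsStrictOrderedRing R] [StarRing R] [TrivialStar R]
  {G : Matrix (Fin (n + 1)) (Fin (n + 1)) R}

theorem posDef_chioCondensation (hG : G.PosDef) : (chioCondensation G).PosDef := by
  have hsymm : G.IsSymm := isHermitian_iff_isSymm.mp hG.isHermitian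
  have pivot_pos : 0 < G 0 0 := hG.diag_pos
  refine .of_dotProduct_mulVec_pos
    (isHermitian_iff_isSymm.mpr (isSymm_chioCondensation hsymm)) fun s hs => ?_
  -- the linear form `G 0` vanishes at this lift of `G 0 0 • s`
  let x : Fin (n + 1) → R := vecCons (-(vecTail (G 0) ⬝ᵥ s)) (G 0 0 • s)
  have hx : x ≠ 0 := fun h =>
    hs <| (smul_eq_zero.mp (congrArg vecTail h)).resolve_left pivot_pos.ne'
  have hx0 : G 0 ⬝ᵥ x = 0 := by
    simp only [x, dotProduct_cons, dotProduct_smul, smul_eq_mul, vecHead]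
    ring
  have quad_pos : 0 < G 0 0 * (x ⬝ᵥ G *ᵥ x) :=
    mul_pos pivot_pos (by simpa using hG.dotProduct_mulVec_pos hx)
  have tail_pos : 0 < (G 0 0 * G 0 0) * (s ⬝ᵥ chioCondensation G *ᵥ s) := by
    rw [apply_zero_zero_mul_dotProduct_mulVec hsymm, hx0] at quad_pos
    simpa [x, mulVec_smul, mul_assoc] using quad_pos
  rw [star_trivial]
  exact pos_of_mul_pos_right tail_pos (mul_self_nonneg _)

theorem posDef_of_posDef_chioCondensation (hG : G.IsSymm) (pivot_pos : 0 < G 0 0)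
    (hpos : (chioCondensation G).PosDef) : G.PosDef := by
  refine .of_dotProduct_mulVec_pos (isHermitian_iff_isSymm.mpr hG) fun x hx =>
    pos_of_mul_pos_right (a := G 0 0) ?_ pivot_pos.le
  rw [star_trivial, apply_zero_zero_mul_dotProduct_mulVec hG]
  by_cases hs : vecTail x = 0
  · have hx0 : x 0 ≠ 0 := fun h0 => hx <| by
      rw [← cons_head_tail x, hs, vecHead, h0, cons_zero_zero]
    have head_eq : G 0 ⬝ᵥ x = G 0 0 * x 0 := by
      rw [← cons_head_tail x, hs, dotProduct_cons, dotProduct_zero, add_zero]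
      rfl
    rw [hs, head_eq, zero_dotProduct, add_zero]
    positivity
  · have tail_pos := hpos.dotProduct_mulVec_pos hs
    rw [star_trivial] at tail_pos
    positivity

theorem posDef_succ_iff (hG : G.IsSymm) :
    G.PosDef ↔ 0 < G 0 0 ∧ (chioCondensation G).PosDef :=
  ⟨fun h => ⟨h.diag_pos, posDef_chioCondensation h⟩,
    fun h => posDef_of_posDef_chioCondensation hG h.1 h.2⟩

end PosDef

end Condensation

section Hermite

variable {n : ℕ}

theorem exists_GL_col_zero_eq_vecCons {R : Type*} [CommRing R] (W : GL (Fin (n + 1)) R) (t : R) :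
    ∃ V : GL (Fin (n + 2)) R, V.1.col 0 = vecCons t (W.1.col 0) := by
  let unswapped : Matrix (Fin (n + 2)) (Fin (n + 2)) R := bordered (vecCons 1 (vecCons t 0)) W.1
  refine ⟨.mk'' (unswapped.submatrix id (Equiv.swap 0 1)) ?_, ?_⟩
  · rw [det_permute', det_bordered]
    simp
  · ext i
    cases i using Fin.cases <;> simp [unswapped, bordered]

theorem posDef_transpose_mul_mul {ι R : Type*} [Fintype ι] [DecidableEq ι] [CommRing R]
    [PartialOrder R] [StarRing R] [TrivialStar R] {G : Matrix ι ι R}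
    (hG : G.PosDef) (U : GL ι R) : (U.1ᵀ * G * U.1).PosDef := by
  rw [← conjTranspose_eq_transpose_of_trivial]
  exact hG.conjTranspose_mul_mul_same (mulVec_injective_of_isUnit U.isUnit)

theorem det_transpose_mul_mul {ι : Type*} [Fintype ι] [DecidableEq ι] (G : Matrix ι ι ℤ)
    (U : GL ι ℤ) : (U.1ᵀ * G * U.1).det = G.det := by
  have hU : U.1.det * U.1.det = 1 := Int.isUnit_mul_self (isUnits_det_units U)
  rw [det_mul, det_mul, det_transpose]
  linear_combination G.det * hU

theorem exists_GL_forall_apply_le {ι : Type*} [Fintype ι] [DecidableEq ι] {G : Matrix ι ι ℤ}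
    (hG : G.PosDef) (i : ι) :
    ∃ U : GL ι ℤ, ∀ V : GL ι ℤ, (U.1ᵀ * G * U.1) i i ≤ (V.1ᵀ * G * V.1) i i := by
  let diag (U : GL ι ℤ) : ℤ := (U.1ᵀ * G * U.1) i i
  refine ⟨Function.argmin fun U => (diag U).toNat, fun V => ?_⟩
  have diag_pos : 0 < diag V := (posDef_transpose_mul_mul hG V).diag_pos
  have toNat_le := Function.argmin_le (fun U => (diag U).toNat) V
  exact (Int.toNat_le.mp toNat_le).trans_eq (Int.toNat_of_nonneg diag_pos.le)

theorem exists_two_mul_abs_mul_add_le {a : ℤ} (ha : 0 < a) (β : ℤ) :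
    ∃ t : ℤ, 2 * |a * t + β| ≤ a := by
  lift a to ℕ using ha.le
  have hnat : 0 < a := by exact_mod_cast ha
  refine ⟨-β.bdiv a, ?_⟩
  have remainder : a * -β.bdiv a + β = β.bmod a := by linarith [Int.bdiv_add_bmod β a]
  have lower := Int.le_bmod (x := β) hnat
  have upper := Int.bmod_le (x := β) hnat
  rw [remainder]
  grind

theorem three_mul_sq_le_of_forall_le {G : Matrix (Fin (n + 2)) (Fin (n + 2)) ℤ} (hG : G.PosDef)
    (hmin : ∀ V : GL (Fin (n + 2)) ℤ, G 0 0 ≤ (V.1ᵀ * G * V.1) 0 0) (W : GL (Fin (n + 1)) ℤ) :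
    3 * G 0 0 ^ 2 ≤ 4 * (W.1ᵀ * chioCondensation G * W.1) 0 0 := by
  have pivot_pos : 0 < G 0 0 := hG.diag_pos
  obtain ⟨t, ht⟩ := exists_two_mul_abs_mul_add_le pivot_pos (vecTail (G 0) ⬝ᵥ W.1.col 0)
  obtain ⟨V, hV⟩ := exists_GL_col_zero_eq_vecCons W t
  have hsymm : G.IsSymm := isHermitian_iff_isSymm.mp hG.isHermitian
  -- the lift of the first column of `W` that is size-reduced modulo the pivot vector
  set x : Fin (n + 2) → ℤ := vecCons t (W.1.col 0) with hx
  have complete_square :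
      G 0 0 * (x ⬝ᵥ G *ᵥ x) = (G 0 ⬝ᵥ x) ^ 2 + (W.1ᵀ * chioCondensation G * W.1) 0 0 :=
    (apply_zero_zero_mul_dotProduct_mulVec hsymm x).trans
      (congrArg _ (mul_mul_apply W.1ᵀ (chioCondensation G) W.1 0 0).symm)
  have square_le : 4 * (G 0 ⬝ᵥ x) ^ 2 ≤ G 0 0 ^ 2 := by
    have two_abs_le : 2 * |G 0 ⬝ᵥ x| ≤ G 0 0 := by
      rw [hx, dotProduct_cons]
      exact ht
    calc 4 * (G 0 ⬝ᵥ x) ^ 2 = (2 * |G 0 ⬝ᵥ x|) ^ 2 := by rw [mul_pow, sq_abs]; norm_num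
      _ ≤ G 0 0 ^ 2 := by gcongr
  have pivot_le : G 0 0 ≤ x ⬝ᵥ G *ᵥ x := by
    rw [← hV]
    exact (hmin V).trans_eq (mul_mul_apply ..)
  linarith [mul_le_mul_of_nonneg_left pivot_le pivot_pos.le]

theorem hermite_bound_succ {R : Type*} [CommRing R] [LinearOrder R] [IsStrictOrderedRing R]
    {a q d d' : R} {e : ℕ} (ha : 0 < a) (haq : 3 * a ^ 2 ≤ 4 * q)
    (hq : 3 ^ e * q ^ (n + 1) ≤ 4 ^ e * d') (hd : a * d' = a ^ (n + 1) * d) :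
    3 ^ (e + (n + 1)) * a ^ (n + 2) ≤ 4 ^ (e + (n + 1)) * d := by
  have hd' : d' = a ^ n * d := mul_left_cancel₀ ha.ne' (by rw [hd]; ring)
  refine le_of_mul_le_mul_left ?_ (pow_pos ha n)
  calc a ^ n * (3 ^ (e + (n + 1)) * a ^ (n + 2))
      = 3 ^ e * (3 * a ^ 2) ^ (n + 1) := by rw [mul_pow, ← pow_mul]; ring
    _ ≤ 3 ^ e * (4 * q) ^ (n + 1) := by gcongr
    _ = 4 ^ (n + 1) * (3 ^ e * q ^ (n + 1)) := by rw [mul_pow]; ring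
    _ ≤ 4 ^ (n + 1) * (4 ^ e * d') := by gcongr
    _ = a ^ n * (4 ^ (e + (n + 1)) * d) := by rw [hd']; ring

theorem exists_GL_hermite_bound {G : Matrix (Fin (n + 1)) (Fin (n + 1)) ℤ} (hG : G.PosDef) :
    ∃ U : GL (Fin (n + 1)) ℤ, 3 ^ (n + 1).choose 2 * (U.1ᵀ * G * U.1) 0 0 ^ (n + 1) ≤
      4 ^ (n + 1).choose 2 * G.det := by
  induction n with
  | zero => exact ⟨1, by simp⟩
  | succ n ih =>
    obtain ⟨U, hU⟩ := exists_GL_forall_apply_le hG 0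
    refine ⟨U, ?_⟩
    set G' := U.1ᵀ * G * U.1 with hG'
    have posDef' : G'.PosDef := posDef_transpose_mul_mul hG U
    have hmin (V : GL (Fin (n + 2)) ℤ) : G' 0 0 ≤ (V.1ᵀ * G' * V.1) 0 0 := by
      simpa [hG', Matrix.mul_assoc] using hU (U * V)
    obtain ⟨W, hW⟩ := ih (posDef_chioCondensation posDef')
    rw [Nat.choose_succ_succ', Nat.choose_one_right, add_comm (n + 1),
      ← det_transpose_mul_mul G U]
    exact hermite_bound_succ posDef'.diag_pos (three_mul_sq_le_of_forall_le posDef' hmin W) hW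
      (apply_zero_zero_mul_det_chioCondensation G')

theorem exists_GL_apply_zero_zero_eq_one (hn : n < 5) {G : Matrix (Fin (n + 1)) (Fin (n + 1)) ℤ}
    (hG : G.PosDef) (hdet : G.det = 1) :
    ∃ U : GL (Fin (n + 1)) ℤ, (U.1ᵀ * G * U.1) 0 0 = 1 := by
  obtain ⟨U, hU⟩ := exists_GL_hermite_bound hG
  have pivot_pos : 0 < (U.1ᵀ * G * U.1) 0 0 := (posDef_transpose_mul_mul hG U).diag_pos
  refine ⟨U, le_antisymm (not_lt.mp fun pivot_gt => ?_) pivot_pos⟩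
  have two_pow_le : (2 : ℤ) ^ (n + 1) ≤ (U.1ᵀ * G * U.1) 0 0 ^ (n + 1) := by gcongr; omega
  have bound := (mul_le_mul_of_nonneg_left two_pow_le (by positivity)).trans hU
  rw [hdet, mul_one] at bound
  interval_cases n <;> norm_num [Nat.choose] at bound

theorem exists_transpose_mul_self_eq_of_chioCondensation {R : Type*} [CommRing R]
    {G : Matrix (Fin (n + 1)) (Fin (n + 1)) R}
    (hG : G.IsSymm) (pivot : G 0 0 = 1) {A : Matrix (Fin n) (Fin n) R}
    (hA : Aᵀ * A = chioCondensation G) :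
    ∃ B : Matrix (Fin (n + 1)) (Fin (n + 1)) R, Bᵀ * B = G := by
  refine ⟨bordered (G 0) A, ?_⟩
  ext i j
  have hAij (i j : Fin n) : ∑ k, A k i * A k j = G i.succ j.succ - G 0 i.succ * G 0 j.succ := by
    simpa [mul_apply, chioCondensation, pivot, hG.apply 0] using congrFun₂ hA i j
  cases i using Fin.cases <;> cases j using Fin.cases <;>
    simp [bordered, mul_apply, Fin.sum_univ_succ, pivot, hG.apply 0, hAij]

theorem exists_transpose_mul_self_eq (hn : n ≤ 5) {G : Matrix (Fin n) (Fin n) ℤ} (hG : G.PosDef)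
    (hdet : G.det = 1) : ∃ A : Matrix (Fin n) (Fin n) ℤ, Aᵀ * A = G := by
  induction n with
  | zero => exact ⟨0, Subsingleton.elim _ _⟩
  | succ n ih =>
    obtain ⟨U, pivot⟩ := exists_GL_apply_zero_zero_eq_one (by omega) hG hdet
    have posDef' := posDef_transpose_mul_mul hG U
    have det' := (det_transpose_mul_mul G U).trans hdet
    have hsymm : (U.1ᵀ * G * U.1).IsSymm := isHermitian_iff_isSymm.mp posDef'.isHermitian
    obtain ⟨A, hA⟩ := ih (by omega) (posDef_chioCondensation posDef') (by
      simpa [pivot, det'] using apply_zero_zero_mul_det_chioCondensation (U.1ᵀ * G * U.1))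
    obtain ⟨B, hB⟩ := exists_transpose_mul_self_eq_of_chioCondensation hsymm pivot hA
    refine ⟨B * U⁻¹.1, ?_⟩
    have hU : U.1 * U⁻¹.1 = 1 := U.mul_inv
    calc (B * U⁻¹.1)ᵀ * (B * U⁻¹.1)
        = U⁻¹.1ᵀ * (Bᵀ * B) * U⁻¹.1 := by simp only [transpose_mul, Matrix.mul_assoc]
      _ = (U.1 * U⁻¹.1)ᵀ * G * (U.1 * U⁻¹.1) := by
        rw [hB]; simp only [transpose_mul, Matrix.mul_assoc]
      _ = G := by rw [hU, transpose_one, Matrix.one_mul, Matrix.mul_one]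

end Hermite

section Arithmetic

open scoped NumberTheorySymbols

theorem exists_prime_two_mul_add_one_eq_mul {m : ℕ} (hm : m % 8 = 5) :
    ∃ p b : ℕ, p.Prime ∧ p % 4 = 3 ∧ b % 8 = 3 ∧ 2 * p + 1 = b * m := by
  obtain ⟨r, hr⟩ : ∃ r, 3 * m = 2 * r + 1 := ⟨(3 * m - 1) / 2, by omega⟩
  have coprime : r.Coprime (4 * m) := by
    have odd : r.Coprime 4 := by
      rw [show (4 : ℕ) = 2 ^ 2 from rfl, Nat.coprime_pow_right_iff two_pos,
        Nat.coprime_two_right, Nat.odd_iff]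
      omega
    have bezout : IsCoprime (r : ℤ) m := ⟨-2, 3, by linarith⟩
    exact odd.mul_right (Nat.isCoprime_iff_coprime.mp bezout)
  obtain ⟨p, hgt, hp, hmod⟩ :=
    Nat.forall_exists_prime_gt_and_modEq r (by omega : 4 * m ≠ 0) coprime
  obtain ⟨j, hj⟩ := (Nat.modEq_iff_dvd' hgt.le).mp hmod.symm
  have hp_eq : p = 4 * (m * j) + r := by rw [← mul_assoc]; omega
  exact ⟨p, 8 * j + 3, hp, by omega, by omega, by rw [hp_eq]; linarith⟩

theorem jacobiSym_neg_eq_one {p b m : ℕ} (hp : p % 4 = 3) (hb : b % 8 = 3)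
    (h : 2 * p + 1 = b * m) : J(-b | p) = 1 := by
  have p_odd : Odd p := Nat.odd_iff.mpr (by omega)
  have b_odd : Odd b := Nat.odd_iff.mpr (by omega)
  have neg_two : J(-2 | b) = 1 := by
    rw [jacobiSym.at_neg_two b_odd, ZMod.χ₈'_nat_eq_if_mod_eight]
    simp [hb, Nat.odd_iff.mp b_odd]
  have neg_two_mul : J(-2 * p | b) = 1 := by
    have hmod : (-2 * p : ℤ) = 1 + b * -m := by
      have : (2 * p + 1 : ℤ) = b * m := by exact_mod_cast h
      linarith
    rw [jacobiSym.mod_left, hmod, Int.add_mul_emod_self_left, ← jacobiSym.mod_left,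
      jacobiSym.one_left]
  have reciprocal : J(p | b) = 1 := by rwa [jacobiSym.mul_left, neg_two, one_mul] at neg_two_mul
  rw [jacobiSym.neg _ p_odd, ZMod.χ₄_nat_three_mod_four hp,
    jacobiSym.quadratic_reciprocity_three_mod_four (by omega) hp, reciprocal, neg_one_mul, neg_neg]

theorem exists_two_mul_prime_dvd_sq_add {p b : ℕ} [Fact p.Prime] (hp : Odd p) (hb : Odd b)
    (h : J(-b | p) = 1) : ∃ c : ℤ, (2 * p : ℤ) ∣ c ^ 2 + b := by
  obtain ⟨r, hr⟩ := ZMod.isSquare_of_jacobiSym_eq_one h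
  obtain ⟨c, hc, c_odd⟩ : ∃ c : ℤ, (c : ZMod p) = r ∧ Odd c := by
    obtain ⟨c, hc⟩ := ZMod.intCast_surjective r
    rcases Int.even_or_odd c with even | odd
    · exact ⟨c + p, by simp [hc], even.add_odd (by exact_mod_cast hp)⟩
    · exact ⟨c, hc, odd⟩
  have dvd_p : (p : ℤ) ∣ c ^ 2 + b := by
    rw [← ZMod.intCast_zmod_eq_zero_iff_dvd]
    push_cast at hr ⊢
    rw [hc, pow_two, ← hr, neg_add_cancel]
  have dvd_two : (2 : ℤ) ∣ c ^ 2 + b := (c_odd.pow.add_odd (by exact_mod_cast hb)).two_dvd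
  have coprime : IsCoprime (2 : ℤ) p :=
    Nat.isCoprime_iff_coprime.mpr (Nat.coprime_two_left.mpr hp)
  exact ⟨c, coprime.mul_dvd dvd_two dvd_p⟩

theorem exists_add_add_sq_eq_mul {m : ℤ} (hm : 0 < m) (hm8 : m % 8 = 5) :
    ∃ a b c : ℤ, 0 < a ∧ 0 < b ∧ a + b + c ^ 2 = a * b * m := by
  lift m to ℕ using hm.le
  obtain ⟨p, b, hp, hp4, hb8, hpb⟩ := exists_prime_two_mul_add_one_eq_mul (m := m) (by omega)
  have : Fact p.Prime := ⟨hp⟩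
  obtain ⟨c, a, ha⟩ := exists_two_mul_prime_dvd_sq_add (Nat.odd_iff.mpr (by omega))
    (Nat.odd_iff.mpr (by omega)) (jacobiSym_neg_eq_one hp4 hb8 hpb)
  have hpb' : (2 * p + 1 : ℤ) = b * m := by exact_mod_cast hpb
  have b_pos : (0 : ℤ) < b := by omega
  have a_pos : 0 < a := by
    have : 0 < 2 * (p : ℤ) * a := ha ▸ by positivity
    exact pos_of_mul_pos_right this (by positivity)
  exact ⟨a, b, c, a_pos, b_pos, by linear_combination ha + a * hpb'⟩

end Arithmetic

section Representation

/-- A Gram matrix of rank `4` extending `diag(u, w)`. The off-diagonal block is the identity, so the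
determinant is `det(diag(u, w) * H - 1)` for the lower right block `H`; the factors `w` and `u` in
`H` turn the condition for determinant `1` into `a + b + c ^ 2 = a * b * (u * w)`. -/
def unimodularGram (u w a b c : ℤ) : Matrix (Fin 4) (Fin 4) ℤ :=
  !![u, 0, 1, 0; 0, w, 0, 1; 1, 0, w * a, c; 0, 1, c, u * b]

variable {u w a b c : ℤ}

theorem isSymm_unimodularGram : (unimodularGram u w a b c).IsSymm := by
  ext i j
  fin_cases i <;> fin_cases j <;> rfl

theorem det_unimodularGram (h : a + b + c ^ 2 = a * b * (u * w)) :
    (unimodularGram u w a b c).det = 1 := by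
  have expansion : (unimodularGram u w a b c).det =
      1 + u * w * (a * b * (u * w) - (a + b + c ^ 2)) := by
    simp [unimodularGram, det_succ_row_zero, Fin.sum_univ_succ, Fin.succAbove]
    ring
  rw [expansion, h, sub_self, mul_zero, add_zero]

theorem posDef_unimodularGram (hu : 0 < u) (hw : 0 < w) (ha : 0 < a) (hb : 0 < b)
    (h : a + b + c ^ 2 = a * b * (u * w)) : (unimodularGram u w a b c).PosDef := by
  have uw_pos : 0 < u * w := mul_pos hu hw
  have auw_sub_one_pos : 0 < a * (u * w) - 1 := by
    have : b * (a * (u * w) - 1) = a + c ^ 2 := by linear_combination -h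
    exact pos_of_mul_pos_right (this ▸ by positivity) hb.le
  have pivot₃_pos : 0 < u * w * (u * (w * a) - 1) := mul_pos uw_pos (by linarith)
  have pivot₄_pos : u * w * (u * c) * (u * w * (u * c)) <
      u * w * (u * (w * a) - 1) * (u * w * (u * (u * b)) - u * u) := by
    have : 0 < u ^ 3 * w := by positivity
    linear_combination this + u ^ 4 * w ^ 2 * h
  have symm : (unimodularGram u w a b c).IsSymm := isSymm_unimodularGram
  have symm₁ := isSymm_chioCondensation symm
  have symm₂ := isSymm_chioCondensation symm₁
  have symm₃ := isSymm_chioCondensation symm₂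
  rw [posDef_succ_iff symm, posDef_succ_iff symm₁, posDef_succ_iff symm₂, posDef_succ_iff symm₃]
  have posDef_empty (M : Matrix (Fin 0) (Fin 0) ℤ) : M.PosDef := Subsingleton.elim 1 M ▸ .one
  simpa [chioCondensation, unimodularGram, hu, posDef_empty] using
    ⟨hw, pivot₃_pos, pivot₄_pos⟩

theorem exists_mul_transpose_eq_diag (hu : 0 < u) (hw : 0 < w) (huw : u * w % 8 = 5) :
    ∃ X : Matrix (Fin 2) (Fin 4) ℤ, X * Xᵀ = !![u, 0; 0, w] := by
  obtain ⟨a, b, c, ha, hb, habc⟩ := exists_add_add_sq_eq_mul (mul_pos hu hw) huw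
  obtain ⟨B, hB⟩ := exists_transpose_mul_self_eq (by norm_num)
    (posDef_unimodularGram hu hw ha hb habc) (det_unimodularGram habc)
  refine ⟨Bᵀ.submatrix ![0, 1] id, ?_⟩
  rw [transpose_submatrix, transpose_transpose,
    ← submatrix_mul _ _ _ _ _ Function.bijective_id, hB]
  ext i j
  fin_cases i <;> fin_cases j <;> rfl

theorem exists_coords_of_mul_transpose_eq_diag {R : Type*} [CommRing R] {u w : R}
    {X : Matrix (Fin 2) (Fin 4) R} (hX : X * Xᵀ = !![u, 0; 0, w]) :
    ∃ y₁ y₂ y₃ y₄ y₅ y₆ y₇ y₈ : R,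
      y₃ ^ 2 + y₄ ^ 2 + y₅ ^ 2 + y₆ ^ 2 = w ∧
      y₁ ^ 2 + y₂ ^ 2 + y₇ ^ 2 + y₈ ^ 2 = u ∧
      y₁ * y₅ + y₂ * y₆ - y₃ * y₇ - y₄ * y₈ = 0 := by
  have entry (i j : Fin 2) : ∑ k, X i k * X j k = !![u, 0; 0, w] i j := by
    rw [← hX]
    rfl
  have h00 := entry 0 0
  have h01 := entry 0 1
  have h11 := entry 1 1
  simp only [Fin.sum_univ_four, of_apply, cons_val', cons_val_zero, cons_val_fin_one,
    cons_val_one] at h00 h01 h11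
  refine ⟨X 0 0, X 0 1, -X 1 2, -X 1 3, X 1 0, X 1 1, X 0 2, X 0 3, ?_, ?_, ?_⟩
  · linear_combination h11
  · linear_combination h00
  · linear_combination h01

end Representation

theorem global_representation_general {u w : ℤ} (hu : 0 < u) (hw : 0 < w)
    (huw : u * w % 8 = 5) :
    (∃ X : Matrix (Fin 2) (Fin 4) ℤ, X * Xᵀ = !![u, 0; 0, w])
      ∧
    (∃ y₁ y₂ y₃ y₄ y₅ y₆ y₇ y₈ : ℤ,
        y₃ ^ 2 + y₄ ^ 2 + y₅ ^ 2 + y₆ ^ 2 = w ∧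
        y₁ ^ 2 + y₂ ^ 2 + y₇ ^ 2 + y₈ ^ 2 = u ∧
        y₁ * y₅ + y₂ * y₆ - y₃ * y₇ - y₄ * y₈ = 0) := by
  obtain ⟨X, hX⟩ := exists_mul_transpose_eq_diag hu hw huw
  exact ⟨⟨X, hX⟩, exists_coords_of_mul_transpose_eq_diag hX⟩

theorem add_two_mul_sub_two_emod_eight {n : ℤ} (hn : Odd n) : (n + 2) * (n - 2) % 8 = 5 := by
  have h := Int.eight_dvd_sq_sub_one_of_odd hn
  rw [show (n + 2) * (n - 2) = n ^ 2 - 1 - 3 by ring]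
  omega

/-- For every odd integer `n ≥ 3` there is a `2 × 4` integer matrix `X` with
`X Xᵀ = Gₙ = diag(n+2, n−2)`; equivalently, there are integers `y₁, …, y₈` with
`y₃² + y₄² + y₅² + y₆² = n − 2`, `y₁² + y₂² + y₇² + y₈² = n + 2` and
`y₁y₅ + y₂y₆ − y₃y₇ − y₄y₈ = 0`. -/
theorem global_representation (n : ℤ) (hodd : Odd n) (hn : 3 ≤ n) :
    (∃ X : Matrix (Fin 2) (Fin 4) ℤ, X * Xᵀ = !![n + 2, 0; 0, n - 2])
      ∧
    (∃ y₁ y₂ y₃ y₄ y₅ y₆ y₇ y₈ : ℤ,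
        y₃ ^ 2 + y₄ ^ 2 + y₅ ^ 2 + y₆ ^ 2 = n - 2 ∧
        y₁ ^ 2 + y₂ ^ 2 + y₇ ^ 2 + y₈ ^ 2 = n + 2 ∧
        y₁ * y₅ + y₂ * y₆ - y₃ * y₇ - y₄ * y₈ = 0) :=
  global_representation_general (by omega) (by omega) (add_two_mul_sub_two_emod_eight hodd)
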